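/- arXiv:1506.07756 — 4 statements merged into one kernel-verified Lean document; each statement's English description precedes it below -/
import Mathlib

section
/- Let ρ_in be a density operator on H = H_1 ⊗ … ⊗ H_n that is FFQLS relative to a neighborhood structure N_in = {N_in,i}, and let U = Π_j U_j, where each U_j = U_{N_j} ⊗ I_{N̄_j} is a unitary neighborhood operator relative to a neighborhood N_j ⊆ {1,…,n} and [U_j, U_{j'}] = 0 for all j, j'. Then ρ_out = U ρ_in U† is FFQLS relative to the neighborhood structure N_out = {N_out,i}, where N_out,i = N_in,i ∪ (∪ {N_j : N_j ∩ N_in,i ≠ ∅}). -/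
namespace QDS

open Matrix
open scoped ComplexOrder

/-! ### Basic single-system notions -/

section Single

variable {ι : Type*} [Fintype ι] [DecidableEq ι]

open Classical in
/-- The (unique) positive-semidefinite square root of a positive-semidefinite matrix
(junk value `0` if no positive-semidefinite square root exists). -/
noncomputable def msqrt (A : Matrix ι ι ℂ) : Matrix ι ι ℂ :=
  if h : ∃ B : Matrix ι ι ℂ, B.PosSemidef ∧ B * B = A then h.choose else 0

open Classical in
/-- The Moore–Penrose pseudoinverse of a matrix, defined via its characterizing
properties (it always exists and is unique for complex matrices). -/
noncomputable def mpinv (A : Matrix ι ι ℂ) : Matrix ι ι ℂ :=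
  if h : ∃ B : Matrix ι ι ℂ,
      A * B * A = A ∧ B * A * B = B ∧ (A * B)ᴴ = A * B ∧ (B * A)ᴴ = B * A
  then h.choose else 0

/-- A density operator: positive semidefinite with unit trace. -/
def IsDensity (ρ : Matrix ι ι ℂ) : Prop := ρ.PosSemidef ∧ ρ.trace = 1

/-- A CPTP map in Kraus (operator-sum) form. -/
def IsCPTP (T : Matrix ι ι ℂ →ₗ[ℂ] Matrix ι ι ℂ) : Prop :=
  ∃ (m : ℕ) (M : Fin m → Matrix ι ι ℂ),
    (∀ X, T X = ∑ k, M k * X * (M k)ᴴ) ∧ (∑ k, (M k)ᴴ * M k) = 1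

/-- The Lindblad (QDS) generator with Hamiltonian `Hm` and noise operators `Lk`:
`L(X) = -i[Hm, X] + Σₖ (Lₖ X Lₖ† - ½{Lₖ†Lₖ, X})`. -/
noncomputable def lindbladMap (Hm : Matrix ι ι ℂ) {m : ℕ} (Lk : Fin m → Matrix ι ι ℂ) :
    Matrix ι ι ℂ →ₗ[ℂ] Matrix ι ι ℂ :=
  (-Complex.I) • (LinearMap.mulLeft ℂ Hm - LinearMap.mulRight ℂ Hm) +
    ∑ k, ((LinearMap.mulRight ℂ (Lk k)ᴴ).comp (LinearMap.mulLeft ℂ (Lk k)) -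
      ((1 : ℂ)/2) • (LinearMap.mulLeft ℂ ((Lk k)ᴴ * Lk k) +
        LinearMap.mulRight ℂ ((Lk k)ᴴ * Lk k)))

/-- `L` is a QDS (Lindblad) generator. -/
def IsLindblad (L : Matrix ι ι ℂ →ₗ[ℂ] Matrix ι ι ℂ) : Prop :=
  ∃ Hm : Matrix ι ι ℂ, Hm.IsHermitian ∧
    ∃ (m : ℕ) (Lk : Fin m → Matrix ι ι ℂ), L = lindbladMap Hm Lk

/-- `Ld` is the Hilbert–Schmidt adjoint of `L` (w.r.t. `⟨X,Y⟩ = Tr(X†Y)`). -/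
def IsHSAdjoint (L Ld : Matrix ι ι ℂ →ₗ[ℂ] Matrix ι ι ℂ) : Prop :=
  ∀ X Y : Matrix ι ι ℂ, ((Ld X)ᴴ * Y).trace = (Xᴴ * L Y).trace

/-- The fixed-point set of a (super)operator. -/
def fixSet (T : Matrix ι ι ℂ →ₗ[ℂ] Matrix ι ι ℂ) : Set (Matrix ι ι ℂ) := {X | T X = X}

/-- The support of an operator: the orthogonal complement of its kernel,
equivalently the range of its adjoint. -/
noncomputable def msupp (A : Matrix ι ι ℂ) : Submodule ℂ (ι → ℂ) := LinearMap.range (Aᴴ).mulVecLin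

/-- The support of a set of operators: the span of the union of their supports. -/
noncomputable def suppSet (W : Set (Matrix ι ι ℂ)) : Submodule ℂ (ι → ℂ) := ⨆ O ∈ W, msupp O

/-- The minimal modular-invariant distorted algebra generated by `W` relative to `ρ`:
the smallest subspace containing `W` that is closed under the adjoint, under the
`ρ`-modified product `(X,Y) ↦ X ρ⁻ Y`, and under the modular map `X ↦ ρ^{1/2} X ρ⁻^{1/2}`. -/
noncomputable def Fdist (ρ : Matrix ι ι ℂ) (W : Set (Matrix ι ι ℂ)) :
    Submodule ℂ (Matrix ι ι ℂ) :=
  sInf {S : Submodule ℂ (Matrix ι ι ℂ) | W ⊆ S ∧ (∀ X ∈ S, Xᴴ ∈ S) ∧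
    (∀ X ∈ S, ∀ Y ∈ S, X * mpinv ρ * Y ∈ S) ∧
    (∀ X ∈ S, msqrt ρ * X * mpinv (msqrt ρ) ∈ S)}

/-- `ρ` is globally asymptotically stable for the generator `L`: it is invariant and every
solution of `ẋ = L(x)` starting at a density operator converges to `ρ` as `t → ∞`. -/
def IsGAS (L : Matrix ι ι ℂ →ₗ[ℂ] Matrix ι ι ℂ) (ρ : Matrix ι ι ℂ) : Prop :=
  L ρ = 0 ∧
  ∀ σ : Matrix ι ι ℂ, IsDensity σ →
    ∀ x : ℝ → Matrix ι ι ℂ, x 0 = σ →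
      (∀ t : ℝ, ∀ i j, HasDerivAt (fun s : ℝ => x s i j) (L (x t) i j) t) →
      ∀ i j, Filter.Tendsto (fun t : ℝ => x t i j) Filter.atTop (nhds (ρ i j))

end Single

/-! ### Bipartite notions -/

section Bipartite

variable {α β : Type*} [Fintype α] [Fintype β] [DecidableEq α] [DecidableEq β]

/-- Partial trace over the second factor. -/
noncomputable def ptraceB (ρ : Matrix (α × β) (α × β) ℂ) : Matrix α α ℂ :=
  Matrix.of fun i j => ∑ k : β, ρ (i, k) (j, k)

/-- The operator Schmidt span of `ρ` on the first factor:
`{Tr_B[(I ⊗ B) ρ] : B ∈ B(H_B)}`. -/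
noncomputable def opSchmidtA (ρ : Matrix (α × β) (α × β) ℂ) : Set (Matrix α α ℂ) :=
  {A | ∃ B : Matrix β β ℂ,
    A = ptraceB ((Matrix.kroneckerMap (· * ·) (1 : Matrix α α ℂ) B) * ρ)}

/-- The (vector) Schmidt span of `v ∈ V_A ⊗ V_B` relative to `V_A`: the image of `v`
under partial inner products with vectors of `V_B`. -/
def vSchmidtA (v : α × β → ℂ) : Set (α → ℂ) :=
  {w | ∃ b : β → ℂ, w = fun a => ∑ j, (starRingEnd ℂ) (b j) * v (a, j)}

/-- `Σ_A(v) ⊗ V_B` as a subspace of `V_A ⊗ V_B`. -/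
noncomputable def extVSchmidtA (v : α × β → ℂ) : Submodule ℂ (α × β → ℂ) :=
  Submodule.span ℂ {v' | ∃ w ∈ vSchmidtA v, ∃ b : β → ℂ, v' = fun p => w p.1 * b p.2}

end Bipartite

/-! ### Multipartite notions -/

section Multipartite

variable {n : ℕ} {d : Fin n → Type*} [∀ a, Fintype (d a)] [∀ a, DecidableEq (d a)]

/-- Index type of the neighborhood factor `H_N`. -/
abbrev nbhdIdx (d : Fin n → Type*) (N : Finset (Fin n)) : Type _ :=
  ∀ a : {x : Fin n // x ∈ N}, d a

/-- Index type of the complementary factor `H_N̄`. -/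
abbrev nbhdCoIdx (d : Fin n → Type*) (N : Finset (Fin n)) : Type _ :=
  ∀ a : {x : Fin n // ¬ x ∈ N}, d a

/-- The factorization `H ≃ H_N ⊗ H_N̄` at the level of index types. -/
def splitEquiv (d : Fin n → Type*) (N : Finset (Fin n)) :
    (∀ a, d a) ≃ nbhdIdx d N × nbhdCoIdx d N :=
  Equiv.piEquivPiSubtypeProd (fun x => x ∈ N) d

variable (d)

/-- The operator `A ⊗ B` on `H = H_N ⊗ H_N̄`, viewed as an operator on `H`. -/
noncomputable def splitLift (N : Finset (Fin n))
    (A : Matrix (nbhdIdx d N) (nbhdIdx d N) ℂ)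
    (B : Matrix (nbhdCoIdx d N) (nbhdCoIdx d N) ℂ) :
    Matrix (∀ a, d a) (∀ a, d a) ℂ :=
  (Matrix.kroneckerMap (· * ·) A B).submatrix (splitEquiv d N) (splitEquiv d N)

/-- The neighborhood operator `A ⊗ I_N̄` on `H`. -/
noncomputable def nbhdLift (N : Finset (Fin n))
    (A : Matrix (nbhdIdx d N) (nbhdIdx d N) ℂ) : Matrix (∀ a, d a) (∀ a, d a) ℂ :=
  splitLift d N A 1

/-- The operator `I_N ⊗ B` on `H`. -/
noncomputable def coLift (N : Finset (Fin n))
    (B : Matrix (nbhdCoIdx d N) (nbhdCoIdx d N) ℂ) : Matrix (∀ a, d a) (∀ a, d a) ℂ :=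
  splitLift d N 1 B

/-- The reduced state `ρ_N = Tr_N̄(ρ)` on the neighborhood `N`. -/
noncomputable def nbhdPtrace (N : Finset (Fin n)) (ρ : Matrix (∀ a, d a) (∀ a, d a) ℂ) :
    Matrix (nbhdIdx d N) (nbhdIdx d N) ℂ :=
  Matrix.of fun i j => ∑ k : nbhdCoIdx d N,
    ρ ((splitEquiv d N).symm (i, k)) ((splitEquiv d N).symm (j, k))

/-- The operator Schmidt span of `ρ` on the neighborhood `N`:
`Σ_N(ρ) = {Tr_N̄[(I_N ⊗ B) ρ] : B}`. -/
noncomputable def nbhdSchmidt (N : Finset (Fin n)) (ρ : Matrix (∀ a, d a) (∀ a, d a) ℂ) :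
    Set (Matrix (nbhdIdx d N) (nbhdIdx d N) ℂ) :=
  {A | ∃ B : Matrix (nbhdCoIdx d N) (nbhdCoIdx d N) ℂ,
    A = nbhdPtrace d N (coLift d N B * ρ)}

/-- The extended minimal modular-invariant distorted algebra
`F_{ρ_N}(Σ_N(ρ)) ⊗ B(H_N̄)` as a subspace of `B(H)`. -/
noncomputable def extF (N : Finset (Fin n)) (ρ : Matrix (∀ a, d a) (∀ a, d a) ℂ) :
    Submodule ℂ (Matrix (∀ a, d a) (∀ a, d a) ℂ) :=
  Submodule.span ℂ {X | ∃ A ∈ Fdist (nbhdPtrace d N ρ) (nbhdSchmidt d N ρ),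
    ∃ B : Matrix (nbhdCoIdx d N) (nbhdCoIdx d N) ℂ, X = splitLift d N A B}

/-- A neighborhood QDS generator for `N`: a Lindblad generator whose Hamiltonian and
noise operators all act as `X_N ⊗ I_N̄`. -/
def IsNbhdGen (N : Finset (Fin n))
    (L : Matrix (∀ a, d a) (∀ a, d a) ℂ →ₗ[ℂ] Matrix (∀ a, d a) (∀ a, d a) ℂ) : Prop :=
  ∃ HN : Matrix (nbhdIdx d N) (nbhdIdx d N) ℂ, HN.IsHermitian ∧
    ∃ (m : ℕ) (Lk : Fin m → Matrix (nbhdIdx d N) (nbhdIdx d N) ℂ),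
      L = lindbladMap (nbhdLift d N HN) fun k => nbhdLift d N (Lk k)

/-- A purely dissipative neighborhood generator for `N` (zero Hamiltonian in some
Lindblad representation). -/
def IsDissipNbhdGen (N : Finset (Fin n))
    (L : Matrix (∀ a, d a) (∀ a, d a) ℂ →ₗ[ℂ] Matrix (∀ a, d a) (∀ a, d a) ℂ) : Prop :=
  ∃ (m : ℕ) (Lk : Fin m → Matrix (nbhdIdx d N) (nbhdIdx d N) ℂ),
    L = lindbladMap 0 fun k => nbhdLift d N (Lk k)

/-- The family of neighborhood generators `Lj` is frustration free: every invariant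
state of the sum is invariant for each component. -/
def IsFFFamily {M : ℕ}
    (Lj : Fin M → (Matrix (∀ a, d a) (∀ a, d a) ℂ →ₗ[ℂ] Matrix (∀ a, d a) (∀ a, d a) ℂ)) :
    Prop :=
  ∀ ρ : Matrix (∀ a, d a) (∀ a, d a) ℂ, IsDensity ρ → (∑ j, Lj j) ρ = 0 → ∀ j, Lj j ρ = 0

/-- `ρ` is frustration-free quasi-locally stabilizable relative to the neighborhood
structure `Nb`. -/
def IsFFQLS {M : ℕ} (Nb : Fin M → Finset (Fin n))
    (ρ : Matrix (∀ a, d a) (∀ a, d a) ℂ) : Prop :=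
  ∃ Lj : Fin M → (Matrix (∀ a, d a) (∀ a, d a) ℂ →ₗ[ℂ] Matrix (∀ a, d a) (∀ a, d a) ℂ),
    (∀ j, IsNbhdGen d (Nb j) (Lj j)) ∧ IsFFFamily d Lj ∧ IsGAS (∑ j, Lj j) ρ

/-- A pure state `|ψ⟩⟨ψ|` is dissipatively quasi-locally stabilizable relative to `Nb`:
it is GAS for a QL generator whose components have zero Hamiltonian and neighborhood
noise operators annihilating `ψ`. -/
def IsDQLS {M : ℕ} (Nb : Fin M → Finset (Fin n)) (ψ : (∀ a, d a) → ℂ) : Prop :=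
  ∃ Lj : Fin M → (Matrix (∀ a, d a) (∀ a, d a) ℂ →ₗ[ℂ] Matrix (∀ a, d a) (∀ a, d a) ℂ),
    (∀ j, ∃ (m : ℕ) (Dk : Fin m → Matrix (nbhdIdx d (Nb j)) (nbhdIdx d (Nb j)) ℂ),
      Lj j = lindbladMap 0 (fun k => nbhdLift d (Nb j) (Dk k)) ∧
      ∀ k, (nbhdLift d (Nb j) (Dk k)).mulVec ψ = 0) ∧
    IsGAS (∑ j, Lj j) (Matrix.vecMulVec ψ (star ψ))

/-- The (vector) Schmidt span of `ψ` relative to the neighborhood factor `H_N`. -/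
def vecSchmidt (N : Finset (Fin n)) (ψ : (∀ a, d a) → ℂ) : Set (nbhdIdx d N → ℂ) :=
  {w | ∃ b : nbhdCoIdx d N → ℂ,
    w = fun i => ∑ k, (starRingEnd ℂ) (b k) * ψ ((splitEquiv d N).symm (i, k))}

/-- `Σ_N(ψ) ⊗ H_N̄` as a subspace of `H`. -/
noncomputable def extVecSchmidt (N : Finset (Fin n)) (ψ : (∀ a, d a) → ℂ) :
    Submodule ℂ ((∀ a, d a) → ℂ) :=
  Submodule.span ℂ {v | ∃ w ∈ vecSchmidt d N ψ, ∃ b : nbhdCoIdx d N → ℂ,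
    v = fun x => w ((splitEquiv d N) x).1 * b ((splitEquiv d N) x).2}

end Multipartite


/-! ### Auxiliary facts for Statement 13 -/

section Aux

theorem ite_split {p q r : Prop} [Decidable p] [Decidable q] [Decidable r] (h : p ↔ q ∧ r) :
    (if p then (1 : ℂ) else 0) = (if q then 1 else 0) * (if r then 1 else 0) := by
  by_cases hq : q <;> by_cases hr : r <;> simp [h, hq, hr]

variable {n : ℕ} {d : Fin n → Type*} [∀ a, Fintype (d a)] [∀ a, DecidableEq (d a)]

/-- `X` is a neighborhood operator for `N`. -/
def IsLoc (N : Finset (Fin n)) (X : Matrix (∀ a, d a) (∀ a, d a) ℂ) : Prop :=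
  ∃ A : Matrix (nbhdIdx d N) (nbhdIdx d N) ℂ, X = nbhdLift d N A

theorem splitLift_mul (N : Finset (Fin n))
    (A A' : Matrix (nbhdIdx d N) (nbhdIdx d N) ℂ)
    (B B' : Matrix (nbhdCoIdx d N) (nbhdCoIdx d N) ℂ) :
    splitLift d N A B * splitLift d N A' B' = splitLift d N (A * A') (B * B') := by
  unfold splitLift
  rw [Matrix.submatrix_mul_equiv]
  congr 1
  exact (Matrix.mul_kronecker_mul A A' B B').symm

theorem nbhdLift_conjTranspose (N : Finset (Fin n))
    (A : Matrix (nbhdIdx d N) (nbhdIdx d N) ℂ) :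
    (nbhdLift d N A)ᴴ = nbhdLift d N Aᴴ := by
  ext x y
  simp only [nbhdLift, splitLift, Matrix.conjTranspose_apply, Matrix.submatrix_apply,
    Matrix.kroneckerMap_apply, Matrix.one_apply, star_mul']
  by_cases h : (splitEquiv d N y).2 = (splitEquiv d N x).2
  · simp [h]
  · have h' : ¬ (splitEquiv d N x).2 = (splitEquiv d N y).2 := fun e => h e.symm
    simp [h, h']

theorem nbhdLift_one (N : Finset (Fin n)) :
    nbhdLift d N (1 : Matrix (nbhdIdx d N) (nbhdIdx d N) ℂ) = 1 := by
  unfold nbhdLift splitLift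
  rw [show Matrix.kroneckerMap (· * ·) (1 : Matrix (nbhdIdx d N) (nbhdIdx d N) ℂ)
    (1 : Matrix (nbhdCoIdx d N) (nbhdCoIdx d N) ℂ) = 1 from Matrix.one_kronecker_one]
  exact Matrix.submatrix_one_equiv _

theorem nbhdLift_injective [Nonempty (∀ a, d a)] (N : Finset (Fin n))
    {A B : Matrix (nbhdIdx d N) (nbhdIdx d N) ℂ}
    (h : nbhdLift d N A = nbhdLift d N B) : A = B := by
  obtain ⟨z⟩ := ‹Nonempty (∀ a, d a)›
  ext u v
  have := congrFun (congrFun h ((splitEquiv d N).symm (u, fun a => z a)))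
    ((splitEquiv d N).symm (v, fun a => z a))
  simpa [nbhdLift, splitLift] using this

theorem IsLoc.one (N : Finset (Fin n)) : IsLoc N (1 : Matrix (∀ a, d a) (∀ a, d a) ℂ) :=
  ⟨1, (nbhdLift_one N).symm⟩

theorem IsLoc.mul {N : Finset (Fin n)} {X Y : Matrix (∀ a, d a) (∀ a, d a) ℂ}
    (hX : IsLoc N X) (hY : IsLoc N Y) : IsLoc N (X * Y) := by
  obtain ⟨A, rfl⟩ := hX
  obtain ⟨B, rfl⟩ := hY
  exact ⟨A * B, by simp [nbhdLift, splitLift_mul]⟩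

theorem IsLoc.star {N : Finset (Fin n)} {X : Matrix (∀ a, d a) (∀ a, d a) ℂ}
    (hX : IsLoc N X) : IsLoc N Xᴴ := by
  obtain ⟨A, rfl⟩ := hX
  exact ⟨Aᴴ, nbhdLift_conjTranspose N A⟩

theorem nbhdLift_apply (N : Finset (Fin n)) (A : Matrix (nbhdIdx d N) (nbhdIdx d N) ℂ)
    (x y : ∀ a, d a) :
    nbhdLift d N A x y = A (fun a => x a) (fun a => y a) *
      if (∀ a, a ∉ N → x a = y a) then 1 else 0 := by
  simp only [nbhdLift, splitLift, Matrix.submatrix_apply, Matrix.kroneckerMap_apply,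
    Matrix.one_apply, splitEquiv, Equiv.piEquivPiSubtypeProd_apply, funext_iff, Subtype.forall]

theorem IsLoc.mono {N N' : Finset (Fin n)} (hN : N ⊆ N')
    {X : Matrix (∀ a, d a) (∀ a, d a) ℂ} (hX : IsLoc N X) : IsLoc N' X := by
  obtain ⟨A, rfl⟩ := hX
  refine ⟨Matrix.of fun u v => A (fun a => u ⟨a, hN a.2⟩) (fun a => v ⟨a, hN a.2⟩) *
    if (∀ a (h : a ∈ N'), a ∉ N → u ⟨a, h⟩ = v ⟨a, h⟩) then 1 else 0, ?_⟩
  ext x y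
  rw [nbhdLift_apply, nbhdLift_apply, Matrix.of_apply, mul_assoc]
  congr 1
  apply ite_split
  constructor
  · intro h
    exact ⟨fun a _ ha => h a ha, fun a ha => h a fun h' => ha (hN h')⟩
  · rintro ⟨h1, h2⟩ a ha
    by_cases h : a ∈ N'
    · exact h1 a h ha
    · exact h2 a h

theorem IsLoc.commute {N N' : Finset (Fin n)} (hN : ∀ a ∈ N', a ∉ N)
    {X Y : Matrix (∀ a, d a) (∀ a, d a) ℂ} (hX : IsLoc N X) (hY : IsLoc N' Y) :
    X * Y = Y * X := by
  obtain ⟨A, rfl⟩ := hX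
  obtain ⟨B, rfl⟩ := hY
  have key : nbhdLift d N' B = splitLift d N 1
      (Matrix.of fun u v => B (fun a => u ⟨a, hN a a.2⟩) (fun a => v ⟨a, hN a a.2⟩) *
        if (∀ a (h : a ∉ N), a ∉ N' → u ⟨a, h⟩ = v ⟨a, h⟩) then 1 else 0) := by
    ext x y
    rw [nbhdLift_apply]
    simp only [splitLift, Matrix.submatrix_apply, Matrix.kroneckerMap_apply,
      Matrix.one_apply, splitEquiv, Equiv.piEquivPiSubtypeProd_apply, funext_iff,
      Subtype.forall, Matrix.of_apply]
    rw [mul_left_comm]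
    congr 1
    apply ite_split
    constructor
    · intro h
      exact ⟨fun a ha => h a fun h' => hN a h' ha, fun a _ ha => h a ha⟩
    · rintro ⟨h1, h2⟩ a ha
      by_cases h : a ∈ N
      · exact h1 a h
      · exact h2 a h ha
  rw [key, nbhdLift, splitLift_mul, splitLift_mul]
  simp

/-- The product splits as `Q * R`, with `Q` local on `N'` and `R` a unitary commuting with
everything local on `N`. -/
theorem prod_split {K : ℕ} (NU : Fin K → Finset (Fin n)) (N N' : Finset (Fin n))
    (U : Fin K → Matrix (∀ a, d a) (∀ a, d a) ℂ)
    (hU : ∀ j, U j ∈ Matrix.unitaryGroup (∀ a, d a) ℂ)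
    (hloc : ∀ j, IsLoc (NU j) (U j))
    (hcomm : ∀ j j', U j * U j' = U j' * U j)
    (hN' : ∀ j, (NU j ∩ N).Nonempty → NU j ⊆ N') (l : List (Fin K)) :
    ∃ Q R : Matrix (∀ a, d a) (∀ a, d a) ℂ, (l.map U).prod = Q * R ∧ IsLoc N' Q ∧
      (∀ j, U j * Q = Q * U j) ∧ R * Rᴴ = 1 ∧ ∀ X, IsLoc N X → X * R = R * X := by
  induction l with
  | nil => exact ⟨1, 1, by simp, IsLoc.one _, by simp, by simp, by simp⟩
  | cons j l ih =>
    obtain ⟨Q, R, hP, hQ, hUQ, hR, hRX⟩ := ih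
    rw [List.map_cons, List.prod_cons, hP]
    by_cases h : (NU j ∩ N).Nonempty
    · refine ⟨U j * Q, R, by rw [mul_assoc], ((hloc j).mono (hN' j h)).mul hQ, ?_, hR, hRX⟩
      intro k
      rw [← mul_assoc, hcomm k j, mul_assoc, hUQ k, mul_assoc]
    · refine ⟨Q, U j * R, by rw [← mul_assoc, hUQ j, mul_assoc], hQ, hUQ, ?_, ?_⟩
      · have := Matrix.mem_unitaryGroup_iff.mp (hU j)
        rw [Matrix.star_eq_conjTranspose] at this
        rw [Matrix.conjTranspose_mul, mul_assoc, ← mul_assoc R, hR, one_mul, this]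
      · intro X hX
        have hc : X * U j = U j * X := by
          refine hX.commute ?_ (hloc j)
          intro a ha haN
          exact h ⟨a, Finset.mem_inter.mpr ⟨ha, haN⟩⟩
        rw [← mul_assoc, hc, mul_assoc, hRX X hX, mul_assoc]

end Aux

section Conj

variable {ι : Type*} [Fintype ι] [DecidableEq ι]

/-- The map `X ↦ P X P†`. -/
noncomputable def conjMap (P : Matrix ι ι ℂ) : Matrix ι ι ℂ →ₗ[ℂ] Matrix ι ι ℂ :=
  (LinearMap.mulRight ℂ Pᴴ).comp (LinearMap.mulLeft ℂ P)

theorem conjMap_apply (P X : Matrix ι ι ℂ) : conjMap P X = P * X * Pᴴ := rfl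

theorem conjMap_mul {P : Matrix ι ι ℂ} (hP : Pᴴ * P = 1) (X Y : Matrix ι ι ℂ) :
    conjMap P (X * Y) = conjMap P X * conjMap P Y := by
  simp only [conjMap_apply]
  calc P * (X * Y) * Pᴴ = P * X * 1 * Y * Pᴴ := by noncomm_ring
    _ = P * X * (Pᴴ * P) * Y * Pᴴ := by rw [hP]
    _ = _ := by noncomm_ring

theorem conjMap_conjTranspose (P X : Matrix ι ι ℂ) : conjMap P Xᴴ = (conjMap P X)ᴴ := by
  simp [conjMap_apply, mul_assoc]

theorem conjMap_inv {P : Matrix ι ι ℂ} (hP : P * Pᴴ = 1) (X : Matrix ι ι ℂ) :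
    conjMap P (conjMap Pᴴ X) = X := by
  simp only [conjMap_apply, Matrix.conjTranspose_conjTranspose]
  calc P * (Pᴴ * X * P) * Pᴴ = (P * Pᴴ) * X * (P * Pᴴ) := by noncomm_ring
    _ = X := by rw [hP]; simp

theorem lindbladMap_apply (Hm : Matrix ι ι ℂ) {m : ℕ} (Lk : Fin m → Matrix ι ι ℂ)
    (X : Matrix ι ι ℂ) :
    lindbladMap Hm Lk X = (-Complex.I) • (Hm * X - X * Hm) +
      ∑ k, (Lk k * X * (Lk k)ᴴ - ((1 : ℂ)/2) • ((Lk k)ᴴ * Lk k * X + X * ((Lk k)ᴴ * Lk k))) := by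
  simp [lindbladMap, LinearMap.sum_apply, mul_assoc]

theorem conjMap_lindblad {P : Matrix ι ι ℂ} (hP : Pᴴ * P = 1) (hP' : P * Pᴴ = 1)
    (Hm : Matrix ι ι ℂ) {m : ℕ} (Lk : Fin m → Matrix ι ι ℂ) :
    (conjMap P).comp ((lindbladMap Hm Lk).comp (conjMap Pᴴ)) =
      lindbladMap (conjMap P Hm) (fun k => conjMap P (Lk k)) := by
  ext1 X
  simp only [LinearMap.comp_apply, lindbladMap_apply, map_add, map_smul, map_sub, map_sum,
    conjMap_mul hP, conjMap_inv hP', conjMap_conjTranspose]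

theorem IsDensity.conj {P : Matrix ι ι ℂ} (hP : Pᴴ * P = 1) {ρ : Matrix ι ι ℂ}
    (hρ : IsDensity ρ) : IsDensity (conjMap P ρ) := by
  refine ⟨hρ.1.mul_mul_conjTranspose_same P, ?_⟩
  rw [conjMap_apply, Matrix.trace_mul_comm, ← mul_assoc, hP, one_mul, hρ.2]

theorem IsGAS.conj {P : Matrix ι ι ℂ} (hP : Pᴴ * P = 1) (hP' : P * Pᴴ = 1)
    {L : Matrix ι ι ℂ →ₗ[ℂ] Matrix ι ι ℂ} {ρ : Matrix ι ι ℂ} (h : IsGAS L ρ) :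
    IsGAS ((conjMap P).comp (L.comp (conjMap Pᴴ))) (conjMap P ρ) := by
  have hPs : Pᴴᴴ * Pᴴ = 1 := by rw [Matrix.conjTranspose_conjTranspose]; exact hP'
  have inv' : ∀ X, conjMap Pᴴ (conjMap P X) = X := by
    intro X
    have := conjMap_inv (P := Pᴴ) (by rw [Matrix.conjTranspose_conjTranspose]; exact hP) X
    rwa [Matrix.conjTranspose_conjTranspose] at this
  obtain ⟨h0, hG⟩ := h
  refine ⟨by simp [inv', h0], ?_⟩
  intro σ hσ x hx0 hx i j
  have key := hG (conjMap Pᴴ σ) (hσ.conj hPs) (fun t => conjMap Pᴴ (x t)) (by simp [hx0]) ?_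
  · have e : (fun t => x t i j) = fun t => conjMap P (conjMap Pᴴ (x t)) i j := by
      funext t
      rw [conjMap_inv hP']
    rw [e]
    simp only [conjMap_apply P, Matrix.mul_apply (M := P * _), Matrix.mul_apply (M := P)]
    refine tendsto_finsetSum _ fun k _ => Filter.Tendsto.mul_const _ ?_
    exact tendsto_finsetSum _ fun l _ => (key l k).const_mul _
  · intro t i j
    have e : L (conjMap Pᴴ (x t)) =
        conjMap Pᴴ ((conjMap P).comp (L.comp (conjMap Pᴴ)) (x t)) := by
      simp [inv']
    rw [e]
    generalize (conjMap P).comp (L.comp (conjMap Pᴴ)) = L' at hx ⊢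
    simp only [conjMap_apply, Matrix.mul_apply (M := Pᴴ * _), Matrix.mul_apply (M := Pᴴ)]
    refine HasDerivAt.fun_sum fun k _ => HasDerivAt.mul_const ?_ _
    exact HasDerivAt.fun_sum fun l _ => (hx t l k).const_mul _

end Conj

/-! ### Statement 13 -/


theorem stmt13
    {n : ℕ} {d : Fin n → Type*} [∀ a, Fintype (d a)] [∀ a, DecidableEq (d a)]
    {M K : ℕ} (Nin : Fin M → Finset (Fin n)) (NU : Fin K → Finset (Fin n))
    (ρin : Matrix (∀ a, d a) (∀ a, d a) ℂ) (hρ : IsDensity ρin)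
    (hffqls : IsFFQLS d Nin ρin)
    (U : Fin K → Matrix (∀ a, d a) (∀ a, d a) ℂ)
    (hU : ∀ j, U j ∈ Matrix.unitaryGroup (∀ a, d a) ℂ)
    (hnbhd : ∀ j, ∃ V : Matrix (nbhdIdx d (NU j)) (nbhdIdx d (NU j)) ℂ,
      U j = nbhdLift d (NU j) V)
    (hcomm : ∀ j j', U j * U j' = U j' * U j) :
    IsFFQLS d
      (fun i => Nin i ∪
        (Finset.univ.filter fun j => ((NU j) ∩ (Nin i)).Nonempty).biUnion NU)
      ((List.ofFn U).prod * ρin * ((List.ofFn U).prod)ᴴ) := by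
  set P := (List.ofFn U).prod with hPdef
  have hPu : P ∈ Matrix.unitaryGroup (∀ a, d a) ℂ := by
    apply Submonoid.list_prod_mem
    intro x hx
    obtain ⟨j, rfl⟩ := (List.mem_ofFn' U x).mp hx
    exact hU j
  have hP' : P * Pᴴ = 1 := Matrix.mem_unitaryGroup_iff.mp hPu
  have hP : Pᴴ * P = 1 := Matrix.mem_unitaryGroup_iff'.mp hPu
  have hne : Nonempty (∀ a, d a) := by
    by_contra hcon
    rw [not_nonempty_iff] at hcon
    have := hρ.2
    simp [Matrix.trace] at this
  obtain ⟨Lj, hgen, hff, hgas⟩ := hffqls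
  have hsum : (∑ j, (conjMap P).comp ((Lj j).comp (conjMap Pᴴ))) =
      (conjMap P).comp ((∑ j, Lj j).comp (conjMap Pᴴ)) := by
    ext1 X
    simp [LinearMap.sum_apply]
  refine ⟨fun j => (conjMap P).comp ((Lj j).comp (conjMap Pᴴ)), ?_, ?_, ?_⟩
  · intro i
    obtain ⟨HN, hHN, m, Lk, hL⟩ := hgen i
    set N' := Nin i ∪
        (Finset.univ.filter fun j => ((NU j) ∩ (Nin i)).Nonempty).biUnion NU with hN'
    have hloc : ∀ X, IsLoc (Nin i) X → IsLoc N' (conjMap P X) := by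
      intro X hX
      obtain ⟨Q, R, hQR, hQ, -, hR, hRX⟩ := prod_split NU (Nin i) N' U hU hnbhd hcomm
        (fun j hj => (Finset.subset_biUnion_of_mem NU
          (by simpa using hj)).trans Finset.subset_union_right) (List.finRange K)
      rw [← List.ofFn_eq_map, ← hPdef] at hQR
      have e : conjMap P X = Q * X * Qᴴ := by
        rw [conjMap_apply, hQR, Matrix.conjTranspose_mul]
        calc Q * R * X * (Rᴴ * Qᴴ) = Q * (R * X) * Rᴴ * Qᴴ := by noncomm_ring
          _ = Q * (X * R) * Rᴴ * Qᴴ := by rw [hRX X hX]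
          _ = Q * X * (R * Rᴴ) * Qᴴ := by noncomm_ring
          _ = _ := by rw [hR, mul_one]
      rw [e]
      exact (hQ.mul (hX.mono Finset.subset_union_left)).mul hQ.star
    obtain ⟨H', hH'⟩ := hloc _ ⟨HN, rfl⟩
    choose Lk' hLk' using fun k => hloc _ ⟨Lk k, rfl⟩
    refine ⟨H', ?_, m, Lk', ?_⟩
    · apply nbhdLift_injective N'
      rw [← nbhdLift_conjTranspose, ← hH', ← conjMap_conjTranspose, nbhdLift_conjTranspose,
        hHN.eq]
    · change (conjMap P).comp ((Lj i).comp (conjMap Pᴴ)) = _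
      rw [hL, conjMap_lindblad hP hP', hH']
      simp only [hLk']
      rfl
  · intro ρ hρd h0 j
    rw [hsum] at h0
    have inv' : ∀ X, conjMap Pᴴ (conjMap P X) = X := by
      intro X
      have := conjMap_inv (P := Pᴴ) (by rw [Matrix.conjTranspose_conjTranspose]; exact hP) X
      rwa [Matrix.conjTranspose_conjTranspose] at this
    have h1 : (∑ j, Lj j) (conjMap Pᴴ ρ) = 0 := by
      have := congrArg (conjMap Pᴴ) h0
      rwa [LinearMap.comp_apply, LinearMap.comp_apply, inv', map_zero] at this
    have hd : IsDensity (conjMap Pᴴ ρ) :=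
      hρd.conj (by rw [Matrix.conjTranspose_conjTranspose]; exact hP')
    simp [hff _ hd h1 j]
  · rw [hsum]
    exact hgas.conj hP hP'

end QDS
end

section
/- Let L = Σ_j L_j be a QL generator relative to a neighborhood structure N on H = H_1 ⊗ … ⊗ H_n, where each neighborhood generator L_j has a Lindblad representation with Hamiltonian H_j and noise operators {L_{k,j}} all in neighborhood form for N_j. Assume: (i) for each j, alg{H_j together with all L_{k,j}} ⊆ alg{Σ_j H_j together with all L_{k,j} over all k, j}; and (ii) there exists a positive-definite density operator ρ with L_j(ρ) = 0 for all j. Then L is frustration free: every state in ker(L) lies in ker(L_j) for all j. -/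
namespace QDS

open Matrix
open scoped ComplexOrder

/-! ### Helper material for the proof -/

section Helpers

variable {ι κ : Type*} [Fintype ι] [DecidableEq ι] [Fintype κ]

/-- Schroedinger-picture generator with arbitrary finite noise index. -/
noncomputable def genS (Hm : Matrix ι ι ℂ) (K : κ → Matrix ι ι ℂ) :
    Matrix ι ι ℂ →ₗ[ℂ] Matrix ι ι ℂ :=
  (-Complex.I) • (LinearMap.mulLeft ℂ Hm - LinearMap.mulRight ℂ Hm) +
    ∑ k, ((LinearMap.mulRight ℂ (K k)ᴴ).comp (LinearMap.mulLeft ℂ (K k)) -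
      ((1 : ℂ)/2) • (LinearMap.mulLeft ℂ ((K k)ᴴ * K k) +
        LinearMap.mulRight ℂ ((K k)ᴴ * K k)))

/-- Heisenberg-picture generator. -/
noncomputable def genH (Hm : Matrix ι ι ℂ) (K : κ → Matrix ι ι ℂ) :
    Matrix ι ι ℂ →ₗ[ℂ] Matrix ι ι ℂ :=
  Complex.I • (LinearMap.mulLeft ℂ Hm - LinearMap.mulRight ℂ Hm) +
    ∑ k, ((LinearMap.mulRight ℂ (K k)).comp (LinearMap.mulLeft ℂ (K k)ᴴ) -
      ((1 : ℂ)/2) • (LinearMap.mulLeft ℂ ((K k)ᴴ * K k) +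
        LinearMap.mulRight ℂ ((K k)ᴴ * K k)))

theorem genS_apply (Hm : Matrix ι ι ℂ) (K : κ → Matrix ι ι ℂ) (X : Matrix ι ι ℂ) :
    genS Hm K X = (-Complex.I) • (Hm * X - X * Hm) +
      ∑ k, (K k * X * (K k)ᴴ -
        ((1 : ℂ)/2) • ((K k)ᴴ * K k * X + X * ((K k)ᴴ * K k))) := by
  simp [genS, LinearMap.sum_apply, Matrix.mul_assoc]

theorem genH_apply (Hm : Matrix ι ι ℂ) (K : κ → Matrix ι ι ℂ) (X : Matrix ι ι ℂ) :
    genH Hm K X = Complex.I • (Hm * X - X * Hm) +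
      ∑ k, ((K k)ᴴ * X * K k -
        ((1 : ℂ)/2) • ((K k)ᴴ * K k * X + X * ((K k)ᴴ * K k))) := by
  simp [genH, LinearMap.sum_apply, Matrix.mul_assoc]

theorem trace_genH (Hm : Matrix ι ι ℂ) (K : κ → Matrix ι ι ℂ) (X Y : Matrix ι ι ℂ) :
    (genH Hm K X * Y).trace = (X * genS Hm K Y).trace := by
  rw [genH_apply, genS_apply]
  simp only [add_mul, mul_add, Finset.sum_mul, Finset.mul_sum, Matrix.trace_add,
    Matrix.trace_sum, sub_mul, mul_sub, Matrix.trace_sub, smul_mul_assoc, mul_smul_comm,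
    Matrix.trace_smul, smul_eq_mul]
  have e1 : (Hm * X * Y).trace = (X * (Y * Hm)).trace := by
    rw [Matrix.mul_assoc, Matrix.trace_mul_comm, Matrix.mul_assoc]
  rw [e1, ← Matrix.mul_assoc X Hm Y]
  congr 1
  · ring
  · refine Finset.sum_congr rfl fun k _ => ?_
    have e2 : ((K k)ᴴ * X * K k * Y).trace = (X * (K k * Y * (K k)ᴴ)).trace := by
      rw [Matrix.mul_assoc, Matrix.mul_assoc, Matrix.trace_mul_comm, Matrix.mul_assoc]
    have e3 : ((K k)ᴴ * K k * X * Y).trace = (X * (Y * ((K k)ᴴ * K k))).trace := by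
      rw [Matrix.mul_assoc, Matrix.trace_mul_comm, Matrix.mul_assoc]
    rw [e2, e3, ← Matrix.mul_assoc X ((K k)ᴴ * K k) Y]
    ring

theorem genH_conjTranspose {Hm : Matrix ι ι ℂ} (hH : Hm.IsHermitian) (K : κ → Matrix ι ι ℂ)
    (X : Matrix ι ι ℂ) : genH Hm K Xᴴ = (genH Hm K X)ᴴ := by
  rw [genH_apply, genH_apply]
  simp only [conjTranspose_add, conjTranspose_sub, conjTranspose_smul, conjTranspose_sum,
    conjTranspose_mul, conjTranspose_conjTranspose, hH.eq]
  congr 1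
  · simp [smul_sub]
    abel
  · refine Finset.sum_congr rfl fun k _ => ?_
    rw [add_comm (X ᴴ * _)]
    simp [Matrix.mul_assoc]

theorem genH_dissipation (Hm : Matrix ι ι ℂ) (K : κ → Matrix ι ι ℂ) (X : Matrix ι ι ℂ) :
    genH Hm K (Xᴴ * X) = genH Hm K Xᴴ * X + Xᴴ * genH Hm K X +
      ∑ k, (K k * X - X * K k)ᴴ * (K k * X - X * K k) := by
  simp only [genH_apply]
  rw [add_mul, mul_add, Finset.sum_mul, Finset.mul_sum]
  have e1 : Complex.I • (Hm * (Xᴴ * X) - Xᴴ * X * Hm) =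
      Complex.I • (Hm * Xᴴ - Xᴴ * Hm) * X + Xᴴ * Complex.I • (Hm * X - X * Hm) := by
    simp only [smul_mul_assoc, mul_smul_comm, ← smul_add]
    congr 1
    noncomm_ring
  have e2 : ∀ k, (K k)ᴴ * (Xᴴ * X) * K k -
        ((1 : ℂ)/2) • ((K k)ᴴ * K k * (Xᴴ * X) + Xᴴ * X * ((K k)ᴴ * K k)) =
      ((K k)ᴴ * Xᴴ * K k - ((1 : ℂ)/2) • ((K k)ᴴ * K k * Xᴴ + Xᴴ * ((K k)ᴴ * K k))) * X +
      Xᴴ * ((K k)ᴴ * X * K k - ((1 : ℂ)/2) • ((K k)ᴴ * K k * X + X * ((K k)ᴴ * K k))) +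
      (K k * X - X * K k)ᴴ * (K k * X - X * K k) := by
    intro k
    simp only [conjTranspose_sub, conjTranspose_mul, sub_mul, mul_sub, add_mul, mul_add,
      smul_mul_assoc, mul_smul_comm, Matrix.mul_assoc, smul_add]
    module
  rw [e1, Finset.sum_congr rfl fun k _ => e2 k]
  simp only [Finset.sum_add_distrib]
  abel

theorem eq_zero_of_trace {ρ : Matrix ι ι ℂ} (hρ : ρ.PosDef) (C : κ → Matrix ι ι ℂ)
    (h : ((∑ k, (C k)ᴴ * C k) * ρ).trace = 0) (k : κ) : C k = 0 := by
  have hp : ∀ k, (C k * ρ * (C k)ᴴ).PosSemidef :=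
    fun k => hρ.posSemidef.mul_mul_conjTranspose_same (C k)
  have h' : ∑ k, (C k * ρ * (C k)ᴴ).trace = 0 := by
    rw [← h, Finset.sum_mul, Matrix.trace_sum]
    refine Finset.sum_congr rfl fun k _ => ?_
    rw [Matrix.trace_mul_comm, Matrix.mul_assoc]
  have h0 := (Finset.sum_eq_zero_iff_of_nonneg fun k _ => (hp k).trace_nonneg).1 h' k
    (Finset.mem_univ k)
  have h1 : C k * ρ * (C k)ᴴ = 0 := (hp k).trace_eq_zero_iff.1 h0
  have h2 : (C k)ᴴ = 0 := by
    apply Matrix.ext_of_mulVec_single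
    intro i
    rw [Matrix.zero_mulVec]
    by_contra hne
    have := hρ.dotProduct_mulVec_pos hne
    have h3 : star ((C k)ᴴ *ᵥ Pi.single i 1) ⬝ᵥ (ρ *ᵥ ((C k)ᴴ *ᵥ Pi.single i 1)) =
        star (Pi.single i 1) ⬝ᵥ ((C k * ρ * (C k)ᴴ) *ᵥ Pi.single i 1) := by
      simp only [star_mulVec, dotProduct_mulVec, vecMul_vecMul, conjTranspose_conjTranspose]
    rw [h3, h1] at this
    simp at this
  simpa using congrArg conjTranspose h2

theorem commute_of_genH {Hm : Matrix ι ι ℂ} (hH : Hm.IsHermitian) (K : κ → Matrix ι ι ℂ)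
    {ρ : Matrix ι ι ℂ} (hρ : ρ.PosDef) (hfix : genS Hm K ρ = 0)
    {X : Matrix ι ι ℂ} (hX : genH Hm K X = 0) :
    Hm * X = X * Hm ∧ ∀ k, K k * X = X * K k ∧ (K k)ᴴ * X = X * (K k)ᴴ := by
  have key : ∀ Y, genH Hm K Y = 0 → ∀ k, K k * Y = Y * K k := by
    intro Y hY k
    have hY' : genH Hm K Yᴴ = 0 := by rw [genH_conjTranspose hH, hY, conjTranspose_zero]
    have hd := genH_dissipation Hm K Y
    rw [hY, hY', zero_mul, mul_zero, zero_add, zero_add] at hd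
    have ht : (genH Hm K (Yᴴ * Y) * ρ).trace = 0 := by
      rw [trace_genH, hfix, mul_zero, Matrix.trace_zero]
    rw [hd] at ht
    exact sub_eq_zero.1 (eq_zero_of_trace hρ (fun k => K k * Y - Y * K k) ht k)
  have hX' : genH Hm K Xᴴ = 0 := by rw [genH_conjTranspose hH, hX, conjTranspose_zero]
  have h1 := key X hX
  have h2 : ∀ k, (K k)ᴴ * X = X * (K k)ᴴ := fun k => by
    have := congrArg conjTranspose (key _ hX' k)
    simpa using this.symm
  refine ⟨?_, fun k => ⟨h1 k, h2 k⟩⟩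
  rw [genH_apply] at hX
  have hz : ∀ k, (K k)ᴴ * X * K k -
        ((1 : ℂ)/2) • ((K k)ᴴ * K k * X + X * ((K k)ᴴ * K k)) = 0 := by
    intro k
    have a1 : (K k)ᴴ * K k * X = X * ((K k)ᴴ * K k) := by
      rw [Matrix.mul_assoc, h1, ← Matrix.mul_assoc, h2, Matrix.mul_assoc]
    rw [a1, h2, Matrix.mul_assoc]
    module
  rw [Finset.sum_eq_zero fun k _ => hz k, add_zero] at hX
  exact sub_eq_zero.1 ((smul_eq_zero.1 hX).resolve_left Complex.I_ne_zero)

theorem genS_mul {Hm : Matrix ι ι ℂ} (K : κ → Matrix ι ι ℂ) (ρ : Matrix ι ι ℂ)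
    {X : Matrix ι ι ℂ} (hHX : Hm * X = X * Hm) 
    (hK : ∀ k, K k * X = X * K k ∧ (K k)ᴴ * X = X * (K k)ᴴ) :
    genS Hm K (X * ρ) = X * genS Hm K ρ := by
  simp only [genS_apply, mul_add, mul_smul_comm, mul_sub, Finset.mul_sum]
  congr 1
  · rw [← Matrix.mul_assoc Hm, hHX]; simp only [Matrix.mul_assoc]
  · refine Finset.sum_congr rfl fun k _ => ?_
    have a1 : (K k)ᴴ * K k * (X * ρ) = X * ((K k)ᴴ * K k * ρ) := by
      rw [Matrix.mul_assoc, ← Matrix.mul_assoc (K k), (hK k).1, Matrix.mul_assoc X,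
        ← Matrix.mul_assoc _ X, (hK k).2]
      simp only [Matrix.mul_assoc]
    rw [a1, ← Matrix.mul_assoc (K k), (hK k).1]
    simp only [Matrix.mul_assoc]

theorem finrank_ker_eq (L Ld : Matrix ι ι ℂ →ₗ[ℂ] Matrix ι ι ℂ)
    (h : ∀ X Y, (Ld X * Y).trace = (X * L Y).trace) :
    Module.finrank ℂ (LinearMap.ker L) = Module.finrank ℂ (LinearMap.ker Ld) := by
  let Φ : Matrix ι ι ℂ →ₗ[ℂ] Module.Dual ℂ (Matrix ι ι ℂ) :=
    LinearMap.mk₂ ℂ (fun X Y => (X * Y).trace)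
      (by intros; simp [add_mul]) (by intros; simp)
      (by intros; simp [mul_add]) (by intros; simp)
  have hinj : Function.Injective Φ := by
    rw [← LinearMap.ker_eq_bot, LinearMap.ker_eq_bot']
    intro X hX
    exact Matrix.ext_iff_trace_mul_right.2 fun Y => by
      have hY : (X * Y).trace = 0 := LinearMap.congr_fun hX Y
      simpa using hY
  have hsurj : Function.Surjective Φ :=
    (LinearMap.injective_iff_surjective_of_finrank_eq_finrank
      Subspace.dual_finrank_eq.symm).1 hinj
  have hc : L.dualMap.comp Φ = Φ.comp Ld := by
    ext1 X
    intro Y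
    exact (h X Y).symm
  have hr : Module.finrank ℂ (LinearMap.range L) = Module.finrank ℂ (LinearMap.range Ld) := by
    rw [← LinearMap.finrank_range_dualMap_eq_finrank_range,
      ← LinearMap.range_comp_of_range_eq_top L.dualMap (LinearMap.range_eq_top.2 hsurj), hc,
      LinearMap.range_comp]
    exact (Submodule.equivMapOfInjective Φ hinj (LinearMap.range Ld)).finrank_eq.symm
  have a := LinearMap.finrank_range_add_finrank_ker L
  have b := LinearMap.finrank_range_add_finrank_ker Ld
  omega

/-- The kernel of a generator with full-rank fixed point `ρ` is `(ker L†) ρ`. -/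
theorem exists_of_genS {Hm : Matrix ι ι ℂ} (hH : Hm.IsHermitian) (K : κ → Matrix ι ι ℂ)
    {ρ : Matrix ι ι ℂ} (hρ : ρ.PosDef) (hfix : genS Hm K ρ = 0)
    {σ : Matrix ι ι ℂ} (hσ : genS Hm K σ = 0) :
    ∃ X, genH Hm K X = 0 ∧ σ = X * ρ := by
  have hinj : Function.Injective (LinearMap.mulRight ℂ ρ) := by
    intro A B hAB
    exact hρ.isUnit.mul_left_injective hAB
  have hle : (LinearMap.ker (genH Hm K)).map (LinearMap.mulRight ℂ ρ) ≤
      LinearMap.ker (genS Hm K) := by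
    rintro _ ⟨X, hX, rfl⟩
    obtain ⟨h1, h2⟩ := commute_of_genH hH K hρ hfix (LinearMap.mem_ker.1 hX)
    rw [LinearMap.mem_ker, LinearMap.mulRight_apply, genS_mul K ρ h1 h2, hfix, mul_zero]
  have heq := Submodule.eq_of_le_of_finrank_eq hle (by
    rw [← (Submodule.equivMapOfInjective _ hinj (LinearMap.ker (genH Hm K))).finrank_eq]
    exact (finrank_ker_eq _ _ (trace_genH Hm K)).symm)
  have hm : σ ∈ LinearMap.ker (genS Hm K) := hσ
  rw [← heq] at hm
  obtain ⟨X, hX, rfl⟩ := hm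
  exact ⟨X, hX, rfl⟩

/-- Abstract form of the theorem, with general operators. -/
theorem ff_abstract {M : ℕ} (H : Fin M → Matrix ι ι ℂ) (hH : ∀ j, (H j).IsHermitian)
    (m : Fin M → ℕ) (L : ∀ j, Fin (m j) → Matrix ι ι ℂ)
    (halg : ∀ j, StarAlgebra.adjoin ℂ ({H j} ∪ Set.range (L j)) ≤
      StarAlgebra.adjoin ℂ ({∑ j, H j} ∪ {X : Matrix ι ι ℂ | ∃ j k, X = L j k}))
    (ρ : Matrix ι ι ℂ) (hρ : ρ.PosDef) (hfix : ∀ j, lindbladMap (H j) (L j) ρ = 0)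
    (σ : Matrix ι ι ℂ) (hσ : (∑ j, lindbladMap (H j) (L j)) σ = 0) (j : Fin M) :
    lindbladMap (H j) (L j) σ = 0 := by
  let K : (Σ j, Fin (m j)) → Matrix ι ι ℂ := fun p => L p.1 p.2
  have hsum : ∀ X, genS (∑ j, H j) K X = (∑ j, lindbladMap (H j) (L j)) X := by
    intro X
    rw [LinearMap.sum_apply]
    change _ = ∑ j, genS (H j) (L j) X
    simp only [genS_apply, Finset.sum_add_distrib, Fintype.sum_sigma, K]
    congr 1
    rw [← Finset.smul_sum, Finset.sum_mul, Finset.mul_sum, Finset.sum_sub_distrib]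
  have hHs : (∑ j, H j).IsHermitian := by
    unfold Matrix.IsHermitian
    rw [conjTranspose_sum]
    exact Finset.sum_congr rfl fun j _ => (hH j).eq
  have hfix' : genS (∑ j, H j) K ρ = 0 := by
    rw [hsum, LinearMap.sum_apply]
    exact Finset.sum_eq_zero fun j _ => hfix j
  obtain ⟨X, hX, rfl⟩ := exists_of_genS hHs K hρ hfix' ((hsum σ).trans hσ)
  obtain ⟨h1, h2⟩ := commute_of_genH hHs K hρ hfix' hX
  have hle : StarAlgebra.adjoin ℂ ({∑ j, H j} ∪ {X : Matrix ι ι ℂ | ∃ j k, X = L j k}) ≤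
      StarSubalgebra.centralizer ℂ {X} := by
    refine StarAlgebra.adjoin_le ?_
    have hs : ∀ A : Matrix ι ι ℂ, A * X = X * A → Aᴴ * X = X * Aᴴ →
        A ∈ StarSubalgebra.centralizer ℂ {X} := by
      intro A hA hA'
      rw [StarSubalgebra.mem_centralizer_iff]
      rintro _ rfl
      refine ⟨hA.symm, ?_⟩
      have := congrArg conjTranspose hA'
      simpa [star_eq_conjTranspose] using this
    rintro A (hA | ⟨i, k, rfl⟩)
    · rw [Set.mem_singleton_iff] at hA
      subst hA
      exact hs _ h1 (by rw [hHs.eq]; exact h1)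
    · exact hs _ (h2 ⟨i, k⟩).1 (h2 ⟨i, k⟩).2
  have hc : ∀ A ∈ ({H j} ∪ Set.range (L j) : Set (Matrix ι ι ℂ)),
      A * X = X * A ∧ Aᴴ * X = X * Aᴴ := by
    intro A hA
    have hmem := hle (halg j (StarAlgebra.subset_adjoin ℂ _ hA))
    rw [StarSubalgebra.mem_centralizer_iff] at hmem
    obtain ⟨a, b⟩ := hmem X rfl
    refine ⟨a.symm, ?_⟩
    have := congrArg conjTranspose b
    simpa [star_eq_conjTranspose] using this
  change genS (H j) (L j) (X * ρ) = 0
  rw [genS_mul (L j) ρ (hc _ (Or.inl rfl)).1 fun k => hc _ (Or.inr ⟨k, rfl⟩)]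
  change X * lindbladMap (H j) (L j) ρ = 0
  rw [hfix, mul_zero]

end Helpers

theorem nbhdLift_isHermitian {n : ℕ} (d : Fin n → Type*) [∀ a, Fintype (d a)]
    [∀ a, DecidableEq (d a)] (N : Finset (Fin n))
    {A : Matrix (nbhdIdx d N) (nbhdIdx d N) ℂ} (hA : A.IsHermitian) :
    (nbhdLift d N A).IsHermitian := by
  unfold nbhdLift splitLift
  apply Matrix.IsHermitian.submatrix
  have h1 : (1 : Matrix (nbhdCoIdx d N) (nbhdCoIdx d N) ℂ)ᴴ = 1 := conjTranspose_one
  unfold Matrix.IsHermitian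
  have := Matrix.conjTranspose_kronecker A (1 : Matrix (nbhdCoIdx d N) (nbhdCoIdx d N) ℂ)
  rw [h1, hA.eq] at this
  exact this

/-! ### Statement 14 -/

theorem stmt14
    {n : ℕ} {d : Fin n → Type*} [∀ a, Fintype (d a)] [∀ a, DecidableEq (d a)]
    {M : ℕ} (Nb : Fin M → Finset (Fin n))
    (HN : ∀ j, Matrix (nbhdIdx d (Nb j)) (nbhdIdx d (Nb j)) ℂ)
    (hHerm : ∀ j, (HN j).IsHermitian)
    (m : Fin M → ℕ)
    (Lk : ∀ j, Fin (m j) → Matrix (nbhdIdx d (Nb j)) (nbhdIdx d (Nb j)) ℂ)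
    (halg : ∀ j, StarAlgebra.adjoin ℂ
        ({nbhdLift d (Nb j) (HN j)} ∪ Set.range fun k => nbhdLift d (Nb j) (Lk j k)) ≤
      StarAlgebra.adjoin ℂ
        ({∑ j, nbhdLift d (Nb j) (HN j)} ∪
          {X : Matrix (∀ a, d a) (∀ a, d a) ℂ | ∃ j k, X = nbhdLift d (Nb j) (Lk j k)}))
    (ρ : Matrix (∀ a, d a) (∀ a, d a) ℂ) (hρ : ρ.PosDef) (hρtr : ρ.trace = 1)
    (hfix : ∀ j, lindbladMap (nbhdLift d (Nb j) (HN j))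
      (fun k => nbhdLift d (Nb j) (Lk j k)) ρ = 0) :
    ∀ σ : Matrix (∀ a, d a) (∀ a, d a) ℂ, IsDensity σ →
      (∑ j, lindbladMap (nbhdLift d (Nb j) (HN j))
        fun k => nbhdLift d (Nb j) (Lk j k)) σ = 0 →
      ∀ j, lindbladMap (nbhdLift d (Nb j) (HN j))
        (fun k => nbhdLift d (Nb j) (Lk j k)) σ = 0 := by
  exact fun σ _ hσ j => ff_abstract (fun j => nbhdLift d (Nb j) (HN j))
    (fun j => nbhdLift_isHermitian d (Nb j) (hHerm j)) m
    (fun j k => nbhdLift d (Nb j) (Lk j k)) halg ρ hρ hfix σ hσ j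

end QDS
end

section
/- Let Π_1^0 and Π_2^0 be orthogonal projections on a finite-dimensional complex Hilbert space with Π_1^0 Π_2^0 ≠ Π_2^0 Π_1^0, and suppose the limit Π_GS^0 = lim_{n→∞} (Π_1^0 Π_2^0)^n exists and is nonzero. Let Π_1, Π_2 be orthogonal projections satisfying Π_1 Π_2 = Π_2 Π_1 and Π_k Π_k^0 = Π_k^0 Π_k = Π_k^0 for k = 1, 2. Then the projection Π_GS = Π_1 Π_2 strictly dominates Π_GS^0, i.e., Π_GS Π_GS^0 = Π_GS^0 = Π_GS^0 Π_GS but Π_GS ≠ Π_GS^0. -/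
namespace QDS

open Matrix
open scoped ComplexOrder

/-! ### Statement 16 -/

theorem stmt16
    {ι : Type*} [Fintype ι] [DecidableEq ι]
    (P1 P2 PGS0 : Matrix ι ι ℂ)
    (hP1 : P1ᴴ = P1 ∧ P1 * P1 = P1) (hP2 : P2ᴴ = P2 ∧ P2 * P2 = P2)
    (hnc : P1 * P2 ≠ P2 * P1)
    (hlim : Filter.Tendsto (fun k : ℕ => (P1 * P2) ^ k) Filter.atTop (nhds PGS0))
    (hne : PGS0 ≠ 0)
    (Q1 Q2 : Matrix ι ι ℂ)
    (hQ1 : Q1ᴴ = Q1 ∧ Q1 * Q1 = Q1) (hQ2 : Q2ᴴ = Q2 ∧ Q2 * Q2 = Q2)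
    (hQcomm : Q1 * Q2 = Q2 * Q1)
    (hd1 : Q1 * P1 = P1 ∧ P1 * Q1 = P1) (hd2 : Q2 * P2 = P2 ∧ P2 * Q2 = P2) :
    (Q1 * Q2) * PGS0 = PGS0 ∧ PGS0 * (Q1 * Q2) = PGS0 ∧ Q1 * Q2 ≠ PGS0 := by
  obtain ⟨h1, h1'⟩ := hP1
  obtain ⟨h2, h2'⟩ := hP2
  have hs : Filter.Tendsto (fun k : ℕ => (P1 * P2) ^ (k + 1)) Filter.atTop (nhds PGS0) :=
    hlim.comp (Filter.tendsto_add_atTop_nat 1)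
  have e1 : P1 * PGS0 = PGS0 := by
    refine tendsto_nhds_unique (hs.const_mul P1) (hs.congr fun k => ?_)
    rw [pow_succ', ← mul_assoc, ← mul_assoc, h1']
  have e2 : PGS0 * P2 = PGS0 := by
    refine tendsto_nhds_unique (hs.mul_const P2) (hs.congr fun k => ?_)
    rw [pow_succ, mul_assoc, mul_assoc, h2']
  have e3 : P1 * (P2 * PGS0) = PGS0 := by
    refine tendsto_nhds_unique ((hlim.const_mul P2).const_mul P1) (hs.congr fun k => ?_)
    rw [pow_succ', mul_assoc]
  have e4 : PGS0 * P1 * P2 = PGS0 := by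
    refine tendsto_nhds_unique ((hlim.mul_const P1).mul_const P2) (hs.congr fun k => ?_)
    rw [pow_succ, mul_assoc]
  have e1' : PGS0ᴴ * P1 = PGS0ᴴ := by
    have := congrArg conjTranspose e1
    rwa [conjTranspose_mul, h1] at this
  have e2' : P2 * PGS0ᴴ = PGS0ᴴ := by
    have := congrArg conjTranspose e2
    rwa [conjTranspose_mul, h2] at this
  have e5 : P2 * PGS0 = PGS0 := by
    have k1 : PGS0ᴴ * (P2 * PGS0) = PGS0ᴴ * PGS0 := by
      rw [← e1', mul_assoc, e3, e1']
    have k2 : (P2 * PGS0 - PGS0)ᴴ * (P2 * PGS0 - PGS0) = 0 := by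
      rw [conjTranspose_sub, conjTranspose_mul, h2, sub_mul, mul_sub, mul_sub, k1,
        mul_assoc, mul_assoc, ← mul_assoc P2 P2, h2', k1]
      simp
    exact sub_eq_zero.mp (conjTranspose_mul_self_eq_zero.mp k2)
  have e6 : PGS0 * P1 = PGS0 := by
    have k1 : PGS0 * P1 * PGS0ᴴ = PGS0 * PGS0ᴴ := by
      rw [← e2', ← mul_assoc, e4, e2']
    have k2 : (PGS0 * P1 - PGS0) * (PGS0 * P1 - PGS0)ᴴ = 0 := by
      rw [conjTranspose_sub, conjTranspose_mul, h1, sub_mul, mul_sub, mul_sub, k1,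
        ← mul_assoc, ← mul_assoc, mul_assoc PGS0 P1 P1, h1', k1]
      simp
    exact sub_eq_zero.mp (self_mul_conjTranspose_eq_zero.mp k2)
  refine ⟨?_, ?_, fun h => hnc ?_⟩
  · have a : Q2 * PGS0 = PGS0 := by
      rw [← e5, ← mul_assoc, hd2.1]
    rw [mul_assoc, a, ← e1, ← mul_assoc, hd1.1]
  · have a : PGS0 * Q1 = PGS0 := by
      rw [← e6, mul_assoc, hd1.2]
    rw [← mul_assoc, a, ← e2, mul_assoc, hd2.2]
  · have a : P1 * P2 = PGS0 := by
      calc P1 * P2 = (P1 * Q1) * (Q2 * P2) := by rw [hd1.2, hd2.1]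
        _ = P1 * (Q1 * Q2) * P2 := by simp only [mul_assoc]
        _ = PGS0 := by rw [h, e1, e2]
    have b : P2 * P1 = PGS0 := by
      calc P2 * P1 = (P2 * Q2) * (Q1 * P1) := by rw [hd2.2, hd1.1]
        _ = P2 * (Q2 * Q1) * P1 := by simp only [mul_assoc]
        _ = PGS0 := by rw [← hQcomm, h, e5, e6]
    rw [a, b]

end QDS
end

section
/- Let |ψ⟩ be a unit vector in H = H_1 ⊗ … ⊗ H_n and suppose the pure state |ψ⟩⟨ψ| is FFQLS relative to a neighborhood structure N = {N_j}. Then |ψ⟩⟨ψ| is uniquely determined among all density operators by its neighborhood marginals: if τ is a density operator on H with Tr_{N̄_j}(τ) = Tr_{N̄_j}(|ψ⟩⟨ψ|) for every j, then τ = |ψ⟩⟨ψ|. -/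
namespace QDS

open Matrix
open scoped ComplexOrder

set_option linter.unusedSectionVars false

section Helpers

variable {ι : Type*} [Fintype ι] [DecidableEq ι]

/-- The non-Hermitian effective generator `iH + ½ Σ L†L`. -/
noncomputable def effGen (Hm : Matrix ι ι ℂ) {m : ℕ} (Lk : Fin m → Matrix ι ι ℂ) :
    Matrix ι ι ℂ :=
  Complex.I • Hm + ((1 : ℂ) / 2) • ∑ k, (Lk k)ᴴ * Lk k

theorem effGen_star (Hm : Matrix ι ι ℂ) (hH : Hm.IsHermitian) {m : ℕ}
    (Lk : Fin m → Matrix ι ι ℂ) :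
    (effGen Hm Lk)ᴴ = -(Complex.I • Hm) + ((1 : ℂ) / 2) • ∑ k, (Lk k)ᴴ * Lk k := by
  simp [effGen, conjTranspose_add, conjTranspose_smul, conjTranspose_sum, hH.eq]

theorem lindbladMap_eq (Hm : Matrix ι ι ℂ) (hH : Hm.IsHermitian) {m : ℕ}
    (Lk : Fin m → Matrix ι ι ℂ) (X : Matrix ι ι ℂ) :
    lindbladMap Hm Lk X =
      ∑ k, Lk k * X * (Lk k)ᴴ - effGen Hm Lk * X - X * (effGen Hm Lk)ᴴ := by
  rw [effGen_star Hm hH, effGen]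
  simp only [lindbladMap, LinearMap.add_apply, LinearMap.smul_apply, LinearMap.sub_apply,
    LinearMap.sum_apply, LinearMap.comp_apply, LinearMap.mulLeft_apply, LinearMap.mulRight_apply,
    LinearMap.neg_apply, Finset.sum_sub_distrib, ← Finset.smul_sum, Finset.sum_add_distrib, add_mul, mul_add,
    smul_mul_assoc, mul_smul_comm, Finset.sum_mul, Finset.mul_sum, mul_neg, smul_sub, smul_add,
    neg_smul, neg_mul]
  abel

theorem mul_eq_zero_of_trace {τ B : Matrix ι ι ℂ} (hτ : τ.PosSemidef)
    (h : (B * τ * Bᴴ).trace = 0) : B * τ = 0 := by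
  have h0 : B * τ * Bᴴ = 0 := (hτ.mul_mul_conjTranspose_same B).trace_eq_zero_iff.1 h
  open scoped MatrixOrder in
  obtain ⟨C, rfl⟩ := CStarAlgebra.nonneg_iff_eq_star_mul_self.1 hτ.nonneg
  rw [Matrix.star_eq_conjTranspose] at *
  have h1 : (C * Bᴴ)ᴴ * (C * Bᴴ) = 0 := by
    rw [← h0]; simp [Matrix.mul_assoc]
  rw [Matrix.conjTranspose_mul_self_eq_zero] at h1
  have h2 : B * Cᴴ = 0 := by
    have := congrArg conjTranspose h1
    simpa using this
  rw [← Matrix.mul_assoc, h2, Matrix.zero_mul]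

theorem proj_sandwich (ψ : ι → ℂ) (A : Matrix ι ι ℂ) :
    vecMulVec ψ (star ψ) * A * vecMulVec ψ (star ψ) =
      (star ψ ⬝ᵥ (A *ᵥ ψ)) • vecMulVec ψ (star ψ) := by
  rw [Matrix.mul_assoc, Matrix.mul_vecMulVec, Matrix.vecMulVec_mul_vecMulVec]
  ext i j
  simp [vecMulVec_apply]
  ring

theorem proj_psd (ψ : ι → ℂ) : (vecMulVec ψ (star ψ)).PosSemidef :=
  Matrix.posSemidef_vecMulVec_self_star ψ

theorem proj_herm (ψ : ι → ℂ) : (vecMulVec ψ (star ψ))ᴴ = vecMulVec ψ (star ψ) :=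
  (proj_psd ψ).1

theorem proj_idem (ψ : ι → ℂ) (hψ : star ψ ⬝ᵥ ψ = 1) :
    vecMulVec ψ (star ψ) * vecMulVec ψ (star ψ) = vecMulVec ψ (star ψ) := by
  have := proj_sandwich ψ 1
  simpa [hψ] using this

theorem proj_ne (ψ : ι → ℂ) (hψ : star ψ ⬝ᵥ ψ = 1) : vecMulVec ψ (star ψ) ≠ 0 := by
  intro h
  have h1 : (vecMulVec ψ (star ψ)).trace = 1 := by
    rw [Matrix.trace_vecMulVec, dotProduct_comm, hψ]
  rw [h] at h1
  simp at h1

/-- If all the noise operators and the effective generator act as scalars on `X`. -/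
theorem lindblad_scalar (Hm : Matrix ι ι ℂ) (hH : Hm.IsHermitian) {m : ℕ}
    (Lk : Fin m → Matrix ι ι ℂ) (X : Matrix ι ι ℂ) (hX : Xᴴ = X)
    (l : Fin m → ℂ) (μ : ℂ) (hl : ∀ k, Lk k * X = l k • X) (hμ : effGen Hm Lk * X = μ • X) :
    lindbladMap Hm Lk X = (∑ k, l k * star (l k) - μ - star μ) • X := by
  have h1 : ∀ k, X * (Lk k)ᴴ = star (l k) • X := by
    intro k
    have := congrArg conjTranspose (hl k)
    simpa [hX] using this
  have h2 : X * (effGen Hm Lk)ᴴ = star μ • X := by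
    have := congrArg conjTranspose hμ
    simpa [hX] using this
  rw [lindbladMap_eq Hm hH, hμ, h2]
  simp only [hl, smul_mul_assoc, h1, smul_smul, sub_smul, Finset.sum_smul]

/-- Invariance of a pure state. -/
theorem pure_inv (Hm : Matrix ι ι ℂ) (hH : Hm.IsHermitian) {m : ℕ}
    (Lk : Fin m → Matrix ι ι ℂ) (ψ : ι → ℂ) (hψ : star ψ ⬝ᵥ ψ = 1)
    (h : lindbladMap Hm Lk (vecMulVec ψ (star ψ)) = 0) :
    ∃ (l : Fin m → ℂ) (μ : ℂ), (∀ k, Lk k * vecMulVec ψ (star ψ) = l k • vecMulVec ψ (star ψ)) ∧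
      effGen Hm Lk * vecMulVec ψ (star ψ) = μ • vecMulVec ψ (star ψ) ∧
      ∑ k, l k * star (l k) - μ - star μ = 0 := by
  have hs := proj_sandwich ψ
  have hherm := proj_herm ψ
  have hid := proj_idem ψ hψ
  have hne := proj_ne ψ hψ
  have hpsd := proj_psd ψ
  generalize vecMulVec ψ (star ψ) = P at *
  have hE := lindbladMap_eq Hm hH Lk P
  rw [h] at hE
  have hQP : (1 - P) * P = 0 := by rw [sub_mul, one_mul, hid, sub_self]
  have hPQ : P * (1 - P) = 0 := by rw [mul_sub, mul_one, hid, sub_self]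
  have hQ : (1 - P)ᴴ = 1 - P := by simp [hherm]
  have hsum : ∑ k, ((1 - P) * Lk k) * P * ((1 - P) * Lk k)ᴴ = 0 := by
    have h3 : (1 - P) * (∑ k, Lk k * P * (Lk k)ᴴ - effGen Hm Lk * P - P * (effGen Hm Lk)ᴴ) * (1 - P)
        = 0 := by rw [← hE]; simp
    have h4 : (1 - P) * (effGen Hm Lk * P) * (1 - P) = 0 := by
      simp only [Matrix.mul_assoc, hPQ, Matrix.mul_zero]
    have h5 : (1 - P) * (P * (effGen Hm Lk)ᴴ) * (1 - P) = 0 := by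
      rw [← Matrix.mul_assoc, hQP]; simp
    rw [mul_sub (1 - P), mul_sub (1 - P), sub_mul _ _ (1 - P), sub_mul _ _ (1 - P), h4, h5,
      sub_zero, sub_zero] at h3
    rw [← h3, Finset.mul_sum, Finset.sum_mul]
    refine Finset.sum_congr rfl fun k _ => ?_
    rw [conjTranspose_mul, hQ]
    simp only [Matrix.mul_assoc]
  have hk : ∀ k, ((1 - P) * Lk k) * P = 0 := by
    intro k
    apply mul_eq_zero_of_trace hpsd
    have ht := congrArg Matrix.trace hsum
    rw [Matrix.trace_sum, Matrix.trace_zero] at ht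
    exact (Finset.sum_eq_zero_iff_of_nonneg
      (fun k _ => (hpsd.mul_mul_conjTranspose_same _).trace_nonneg)).1 ht k (Finset.mem_univ k)
  have hl : ∀ k, Lk k * P = (star ψ ⬝ᵥ (Lk k *ᵥ ψ)) • P := by
    intro k
    rw [← hs, eq_comm, ← sub_eq_zero, ← neg_eq_zero, ← hk k]
    noncomm_ring
  have hl' : ∀ k, P * (Lk k)ᴴ = star (star ψ ⬝ᵥ (Lk k *ᵥ ψ)) • P := by
    intro k
    have := congrArg conjTranspose (hl k)
    rwa [conjTranspose_mul, conjTranspose_smul, hherm] at this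
  obtain ⟨μ, hμ⟩ : ∃ μ : ℂ, effGen Hm Lk * P = μ • P := by
    have h6 := congrArg (· * P) hE
    simp only [sub_mul, Finset.sum_mul, hl, smul_mul_assoc, hl', hid, hs, zero_mul,
      smul_smul, ← Finset.sum_smul] at h6
    rw [Matrix.mul_assoc, hid] at h6
    rw [eq_comm, sub_right_comm, ← sub_smul, sub_eq_zero] at h6
    exact ⟨_, h6.symm⟩
  refine ⟨_, μ, hl, hμ, ?_⟩
  have h7 := lindblad_scalar Hm hH Lk P hherm _ μ hl hμ
  rw [h] at h7
  exact (smul_eq_zero.1 h7.symm).resolve_right hne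

end Helpers

section HelpersM

variable {n : ℕ} {d : Fin n → Type*} [∀ a, Fintype (d a)] [∀ a, DecidableEq (d a)]

theorem nbhdLift_mul (N : Finset (Fin n)) (A B : Matrix (nbhdIdx d N) (nbhdIdx d N) ℂ) :
    nbhdLift d N (A * B) = nbhdLift d N A * nbhdLift d N B := by
  unfold nbhdLift splitLift
  rw [Matrix.submatrix_mul_equiv]
  congr 1
  have := Matrix.mul_kronecker_mul A B (1 : Matrix (nbhdCoIdx d N) (nbhdCoIdx d N) ℂ)
    (1 : Matrix (nbhdCoIdx d N) (nbhdCoIdx d N) ℂ)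
  rw [one_mul] at this
  exact this

theorem nbhdLift_star (N : Finset (Fin n)) (A : Matrix (nbhdIdx d N) (nbhdIdx d N) ℂ) :
    nbhdLift d N Aᴴ = (nbhdLift d N A)ᴴ := by
  unfold nbhdLift splitLift
  rw [Matrix.conjTranspose_submatrix]
  congr 1
  have := Matrix.conjTranspose_kronecker A (1 : Matrix (nbhdCoIdx d N) (nbhdCoIdx d N) ℂ)
  rw [Matrix.conjTranspose_one] at this
  exact this.symm

theorem nbhdLift_add (N : Finset (Fin n)) (A B : Matrix (nbhdIdx d N) (nbhdIdx d N) ℂ) :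
    nbhdLift d N (A + B) = nbhdLift d N A + nbhdLift d N B := by
  ext i j
  simp [nbhdLift, splitLift, add_mul]

theorem nbhdLift_smul (N : Finset (Fin n)) (c : ℂ) (A : Matrix (nbhdIdx d N) (nbhdIdx d N) ℂ) :
    nbhdLift d N (c • A) = c • nbhdLift d N A := by
  ext i j
  simp [nbhdLift, splitLift, mul_assoc]

/-- `nbhdLift` as a linear map. -/
noncomputable def liftLin (d : Fin n → Type*) [∀ a, Fintype (d a)] [∀ a, DecidableEq (d a)]
    (N : Finset (Fin n)) :
    Matrix (nbhdIdx d N) (nbhdIdx d N) ℂ →ₗ[ℂ] Matrix (∀ a, d a) (∀ a, d a) ℂ where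
  toFun := nbhdLift d N
  map_add' := nbhdLift_add N
  map_smul' := nbhdLift_smul N

theorem nbhdLift_sum (N : Finset (Fin n)) {m : ℕ}
    (A : Fin m → Matrix (nbhdIdx d N) (nbhdIdx d N) ℂ) :
    nbhdLift d N (∑ k, A k) = ∑ k, nbhdLift d N (A k) :=
  map_sum (liftLin d N) A Finset.univ

theorem nbhdLift_sub (N : Finset (Fin n)) (A B : Matrix (nbhdIdx d N) (nbhdIdx d N) ℂ) :
    nbhdLift d N (A - B) = nbhdLift d N A - nbhdLift d N B :=
  map_sub (liftLin d N) A B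

theorem nbhdLift_effGen (N : Finset (Fin n)) (HN : Matrix (nbhdIdx d N) (nbhdIdx d N) ℂ) {m : ℕ}
    (Lk : Fin m → Matrix (nbhdIdx d N) (nbhdIdx d N) ℂ) :
    nbhdLift d N (effGen HN Lk) = effGen (nbhdLift d N HN) (fun k => nbhdLift d N (Lk k)) := by
  simp only [effGen, nbhdLift_add, nbhdLift_smul, nbhdLift_sum, nbhdLift_mul, nbhdLift_star]

theorem trace_nbhdLift (N : Finset (Fin n)) (A : Matrix (nbhdIdx d N) (nbhdIdx d N) ℂ)
    (τ : Matrix (∀ a, d a) (∀ a, d a) ℂ) :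
    (nbhdLift d N A * τ).trace = (A * nbhdPtrace d N τ).trace := by
  simp only [Matrix.trace, Matrix.diag_apply, Matrix.mul_apply]
  rw [← (splitEquiv d N).symm.sum_comp, Fintype.sum_prod_type]
  refine Finset.sum_congr rfl fun i _ => ?_
  simp only [nbhdPtrace, Matrix.of_apply, Finset.mul_sum]
  rw [Finset.sum_comm]
  rw [← (splitEquiv d N).symm.sum_comp, Fintype.sum_prod_type]
  refine Finset.sum_congr rfl fun j _ => ?_
  rw [Finset.sum_comm]
  refine Finset.sum_congr rfl fun k _ => ?_
  simp [nbhdLift, splitLift, Matrix.one_apply]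

theorem transfer (N : Finset (Fin n)) (A : Matrix (nbhdIdx d N) (nbhdIdx d N) ℂ)
    {τ ρ : Matrix (∀ a, d a) (∀ a, d a) ℂ} (hτ : τ.PosSemidef)
    (h : nbhdPtrace d N τ = nbhdPtrace d N ρ) (hρ : nbhdLift d N A * ρ = 0) :
    nbhdLift d N A * τ = 0 := by
  apply mul_eq_zero_of_trace hτ
  rw [Matrix.trace_mul_comm, ← Matrix.mul_assoc, ← nbhdLift_star, ← nbhdLift_mul,
    trace_nbhdLift, h, ← trace_nbhdLift, nbhdLift_mul, Matrix.mul_assoc, hρ]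
  simp

theorem transfer_smul (N : Finset (Fin n)) (A : Matrix (nbhdIdx d N) (nbhdIdx d N) ℂ) (c : ℂ)
    {τ ρ : Matrix (∀ a, d a) (∀ a, d a) ℂ} (hτ : τ.PosSemidef)
    (h : nbhdPtrace d N τ = nbhdPtrace d N ρ) (hρ : nbhdLift d N A * ρ = c • ρ) :
    nbhdLift d N A * τ = c • τ := by
  have := transfer N (A - c • 1) hτ h
    (by rw [nbhdLift_sub, nbhdLift_smul, nbhdLift_one, sub_mul, hρ]; simp)
  rw [nbhdLift_sub, nbhdLift_smul, nbhdLift_one, sub_mul, sub_eq_zero] at this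
  simpa using this

end HelpersM

/-! ### Statement 18 -/

theorem stmt18
    {n : ℕ} {d : Fin n → Type*} [∀ a, Fintype (d a)] [∀ a, DecidableEq (d a)]
    {M : ℕ} (Nb : Fin M → Finset (Fin n))
    (ψ : (∀ a, d a) → ℂ) (hψ : ∑ i, (starRingEnd ℂ) (ψ i) * ψ i = 1)
    (h : IsFFQLS d Nb (Matrix.vecMulVec ψ (star ψ))) :
    ∀ τ : Matrix (∀ a, d a) (∀ a, d a) ℂ, IsDensity τ →
      (∀ j, nbhdPtrace d (Nb j) τ = nbhdPtrace d (Nb j) (Matrix.vecMulVec ψ (star ψ))) →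
      τ = Matrix.vecMulVec ψ (star ψ) := by
  intro τ hτ hm
  have hψ' : star ψ ⬝ᵥ ψ = 1 := by simpa [dotProduct] using hψ
  obtain ⟨Lj, hN, hFF, hG0, hG⟩ := h
  have hD : IsDensity (Matrix.vecMulVec ψ (star ψ)) :=
    ⟨proj_psd ψ, by rw [Matrix.trace_vecMulVec, dotProduct_comm, hψ']⟩
  have hinv := hFF _ hD hG0
  have hτ0 : ∀ j, Lj j τ = 0 := by
    intro j
    obtain ⟨HN, hHN, m, Lk, hL⟩ := hN j
    have hH : (nbhdLift d (Nb j) HN).IsHermitian := by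
      unfold Matrix.IsHermitian
      rw [← nbhdLift_star, hHN.eq]
    have hj := hinv j
    rw [hL] at hj ⊢
    obtain ⟨l, μ, hl, hμ, hc⟩ := pure_inv _ hH _ ψ hψ' hj
    rw [lindblad_scalar _ hH _ τ hτ.1.1 l μ
      (fun k => transfer_smul (Nb j) (Lk k) (l k) hτ.1 (hm j) (hl k)) ?_, hc, zero_smul]
    rw [← nbhdLift_effGen] at hμ ⊢
    exact transfer_smul (Nb j) _ μ hτ.1 (hm j) hμ
  have hsum : (∑ j, Lj j) τ = 0 := by
    rw [LinearMap.sum_apply]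
    exact Finset.sum_eq_zero fun j _ => hτ0 j
  ext i j
  have := hG τ hτ (fun _ => τ) rfl
    (fun t i j => by rw [hsum]; exact hasDerivAt_const _ _) i j
  exact tendsto_nhds_unique tendsto_const_nhds this

end QDS
end
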